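/- Let S be a quantum channel from qubits to ℂ^d given in Kraus form: S(ρ) = ∑_{k∈K} A_k ρ A_k† for a finite family of d×2 complex matrices (A_k) with ∑_k A_k† A_k = I_2. Suppose that for both bases b ∈ {+,×}, the states S(σ_{0,b}) and S(σ_{1,b}) are perfectly distinguishable, i.e. sup over pairs (M_0, M_1) of positive semidefinite d×d matrices with M_0 + M_1 = I of (1/2)(Tr(M_0 S(σ_{0,b})) + Tr(M_1 S(σ_{1,b}))) = 1. Then S is reversible: there exists a finite family (B_j) of 2×d complex matrices with ∑_j B_j† B_j = I_d such that for every 2×2 complex matrix ρ, ∑_j B_j S(ρ) B_j† = ρ. -/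

import Mathlib

/-!
If two states `τ₀`, `τ₁` are perfectly distinguishable, an optimal measurement `(M₀, M₁)` satisfies
`M₁ τ₀ = 0` and `M₀ τ₁ = 0`, so `τ₀ τ₁ = τ₀ (M₀ + M₁) τ₁ = 0`. For the outputs of a channel on
inputs `ρ` and `σ` this says `ρ A_kᴴ A_l σ = 0` for all Kraus operators, and imposing it on both
BB84 bases forces every `A_kᴴ A_l` to be a scalar matrix, which is the Knill–Laflamme condition.

Writing `g_k` for the first column of `A_k`, the condition says that the vectors `A_k v` and
`g_k ⊗ v` have the same inner products. Some isometry therefore maps `A_k v` to `g_k ⊗ v` for all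
`k` and `v`; it moves all the information about `k` into the first tensor factor, and discarding
that factor recovers the input.
-/

open scoped BigOperators ComplexOrder Matrix

/-- BB84 state `|0⟩⟨0|`. -/
noncomputable def σ0p : Matrix (Fin 2) (Fin 2) ℂ := !![1, 0; 0, 0]
/-- BB84 state `|1⟩⟨1|`. -/
noncomputable def σ1p : Matrix (Fin 2) (Fin 2) ℂ := !![0, 0; 0, 1]
/-- BB84 state `|+⟩⟨+|`. -/
noncomputable def σ0x : Matrix (Fin 2) (Fin 2) ℂ := !![1/2, 1/2; 1/2, 1/2]
/-- BB84 state `|−⟩⟨−|`. -/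
noncomputable def σ1x : Matrix (Fin 2) (Fin 2) ℂ := !![1/2, -(1/2); -(1/2), 1/2]

/-- The optimal probability of discriminating the states `τ₀` and `τ₁` (with
equal priors), optimized over all two-outcome POVMs `(M₀, M₁)`. -/
noncomputable def distProb {d : ℕ} (τ₀ τ₁ : Matrix (Fin d) (Fin d) ℂ) : ℝ :=
  sSup { p : ℝ | ∃ M₀ M₁ : Matrix (Fin d) (Fin d) ℂ,
    M₀.PosSemidef ∧ M₁.PosSemidef ∧ M₀ + M₁ = 1 ∧
    p = (1 / 2) * (((M₀ * τ₀).trace).re + ((M₁ * τ₁).trace).re) }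

open scoped Kronecker MatrixOrder
open Module

section Isometry

variable {𝕜 : Type*} [RCLike 𝕜]

theorem exists_linearIsometry_of_finrank_le {F G : Type*}
    [NormedAddCommGroup F] [InnerProductSpace 𝕜 F] [FiniteDimensional 𝕜 F]
    [NormedAddCommGroup G] [InnerProductSpace 𝕜 G] [FiniteDimensional 𝕜 G]
    (h : finrank 𝕜 F ≤ finrank 𝕜 G) : Nonempty (F →ₗᵢ[𝕜] G) := by
  let b := stdOrthonormalBasis 𝕜 F
  let v := stdOrthonormalBasis 𝕜 G ∘ Fin.castLE h
  have hv : Orthonormal 𝕜 v :=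
    (stdOrthonormalBasis 𝕜 G).orthonormal.comp _ (Fin.castLE_injective h)
  have hb : Orthonormal 𝕜 b.toBasis := by simpa only [b.coe_toBasis] using b.orthonormal
  refine ⟨(b.toBasis.constr 𝕜 v).isometryOfOrthonormal hb ?_⟩
  rwa [show b.toBasis.constr 𝕜 v ∘ b.toBasis = v from funext (b.toBasis.constr_basis 𝕜 v)]

theorem exists_linearIsometry_range_of_norm_eq {E F G : Type*} [AddCommGroup E] [Module 𝕜 E]
    [NormedAddCommGroup F] [NormedSpace 𝕜 F] [NormedAddCommGroup G] [NormedSpace 𝕜 G]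
    (f : E →ₗ[𝕜] F) (g : E →ₗ[𝕜] G) (h : ∀ x, ‖f x‖ = ‖g x‖) :
    ∃ L : LinearMap.range f →ₗᵢ[𝕜] G, ∀ x, L (f.rangeRestrict x) = g x := by
  obtain ⟨s, hs⟩ := f.rangeRestrict.exists_rightInverse_of_surjective f.range_rangeRestrict
  have hfs (y : LinearMap.range f) : f (s y) = y := congrArg Subtype.val (LinearMap.congr_fun hs y)
  refine ⟨⟨g ∘ₗ s, fun y => ?_⟩, fun x => ?_⟩
  · rw [LinearMap.comp_apply, ← h, hfs, Submodule.coe_norm]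
  · have hker : f (s (f.rangeRestrict x) - x) = 0 := by
      rw [map_sub, hfs]
      exact sub_self (f x)
    rw [← norm_eq_zero, h, norm_eq_zero, map_sub, sub_eq_zero] at hker
    exact hker

theorem exists_linearIsometry_of_norm_eq {E F G : Type*} [AddCommGroup E] [Module 𝕜 E]
    [NormedAddCommGroup F] [InnerProductSpace 𝕜 F] [FiniteDimensional 𝕜 F]
    [NormedAddCommGroup G] [InnerProductSpace 𝕜 G] [FiniteDimensional 𝕜 G]
    (hFG : finrank 𝕜 F ≤ finrank 𝕜 G) (f : E →ₗ[𝕜] F) (g : E →ₗ[𝕜] G)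
    (h : ∀ x, ‖f x‖ = ‖g x‖) : ∃ L : F →ₗᵢ[𝕜] G, ∀ x, L (f x) = g x := by
  obtain ⟨J⟩ := exists_linearIsometry_of_finrank_le hFG
  obtain ⟨L, hL⟩ := exists_linearIsometry_range_of_norm_eq (J.toLinearMap ∘ₗ f) g
    fun x => (J.norm_map (f x)).trans (h x)
  refine ⟨L.extend.comp J, fun x => ?_⟩
  rw [← hL x, ← L.extend_apply]
  rfl

variable {p q r : Type*} [Fintype p] [Fintype q]

theorem norm_toEuclideanLin_sq [Fintype r] [DecidableEq r] (X : Matrix p r 𝕜)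
    (x : EuclideanSpace 𝕜 r) :
    (‖X.toEuclideanLin x‖ ^ 2 : 𝕜) = inner 𝕜 x ((Xᴴ * X).toEuclideanLin x) := by
  classical
  rw [← inner_self_eq_norm_sq_to_K, Matrix.toLpLin_mul_same,
    Matrix.toEuclideanLin_conjTranspose_eq_adjoint, LinearMap.comp_apply,
    LinearMap.adjoint_inner_right]

theorem exists_isometry_mul_eq_of_gram_eq [DecidableEq p] [Finite r]
    (hpq : Fintype.card p ≤ Fintype.card q) {X : Matrix p r 𝕜} {Y : Matrix q r 𝕜}
    (h : Xᴴ * X = Yᴴ * Y) : ∃ V : Matrix q p 𝕜, Vᴴ * V = 1 ∧ V * X = Y := by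
  classical
  cases nonempty_fintype r
  have hnorm (x : EuclideanSpace 𝕜 r) : ‖X.toEuclideanLin x‖ = ‖Y.toEuclideanLin x‖ := by
    have hsq : (‖X.toEuclideanLin x‖ ^ 2 : 𝕜) = ‖Y.toEuclideanLin x‖ ^ 2 := by
      rw [norm_toEuclideanLin_sq, norm_toEuclideanLin_sq, h]
    exact (pow_left_inj₀ (norm_nonneg _) (norm_nonneg _) two_ne_zero).mp (by exact_mod_cast hsq)
  obtain ⟨L, hL⟩ := exists_linearIsometry_of_norm_eq (by simpa using hpq)
    X.toEuclideanLin Y.toEuclideanLin hnorm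
  obtain ⟨V, hV⟩ := Matrix.toEuclideanLin.surjective L.toLinearMap
  refine ⟨V, ?_, ?_⟩
  · apply Matrix.toEuclideanLin.injective
    refine LinearMap.ext fun x => ext_inner_left 𝕜 fun y => ?_
    rw [Matrix.toLpLin_mul_same, Matrix.toEuclideanLin_conjTranspose_eq_adjoint, hV,
      LinearMap.comp_apply, LinearMap.adjoint_inner_right, Matrix.toLpLin_one]
    exact L.inner_map_map y x
  · apply Matrix.toEuclideanLin.injective
    rw [Matrix.toLpLin_mul_same, hV]
    exact LinearMap.ext hL

end Isometry

section PosSemidef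

variable {𝕜 n : Type*} [RCLike 𝕜] [Fintype n] {M τ : Matrix n n 𝕜}

theorem trace_mul_nonneg_of_posSemidef (hM : M.PosSemidef) (hτ : τ.PosSemidef) :
    0 ≤ (M * τ).trace := by
  classical
  obtain ⟨N, rfl⟩ := CStarAlgebra.nonneg_iff_eq_star_mul_self.mp hM.nonneg
  rw [Matrix.star_eq_conjTranspose, Matrix.mul_assoc, Matrix.trace_mul_comm]
  exact (hτ.mul_mul_conjTranspose_same N).trace_nonneg

theorem mul_eq_zero_of_trace_mul_eq_zero (hM : M.PosSemidef) (hτ : τ.PosSemidef)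
    (h : (M * τ).trace = 0) : M * τ = 0 := by
  classical
  obtain ⟨N, rfl⟩ := CStarAlgebra.nonneg_iff_eq_star_mul_self.mp hM.nonneg
  obtain ⟨R, rfl⟩ := CStarAlgebra.nonneg_iff_eq_mul_star_self.mp hτ.nonneg
  simp only [Matrix.star_eq_conjTranspose] at h ⊢
  have hNR : N * R = 0 := by
    rw [← Matrix.trace_mul_conjTranspose_self_eq_zero_iff, ← h, Matrix.conjTranspose_mul,
      ← Matrix.mul_assoc, Matrix.trace_mul_comm]
    simp only [Matrix.mul_assoc]
  rw [Matrix.mul_assoc, ← Matrix.mul_assoc N, hNR, Matrix.zero_mul, Matrix.mul_zero]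

end PosSemidef

section Discrimination

theorem isCompact_Icc_zero_one_of_properSpace {𝓐 : Type*} [CStarAlgebra 𝓐] [PartialOrder 𝓐]
    [StarOrderedRing 𝓐] [ProperSpace 𝓐] : IsCompact (Set.Icc (0 : 𝓐) 1) := by
  refine (isCompact_closedBall (0 : 𝓐) 1).of_isClosed_subset isClosed_Icc fun a ha => ?_
  rw [mem_closedBall_zero_iff, CStarAlgebra.norm_le_one_iff_of_nonneg a ha.1]
  exact ha.2

open scoped Matrix.Norms.L2Operator in
theorem exists_measurement_eq_distProb {d : ℕ} (τ₀ τ₁ : Matrix (Fin d) (Fin d) ℂ) :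
    ∃ M₀ M₁ : Matrix (Fin d) (Fin d) ℂ, M₀.PosSemidef ∧ M₁.PosSemidef ∧ M₀ + M₁ = 1 ∧
      distProb τ₀ τ₁ = (1 / 2) * ((M₀ * τ₀).trace.re + (M₁ * τ₁).trace.re) := by
  let successProb (M : Matrix (Fin d) (Fin d) ℂ) : ℝ :=
    (1 / 2) * ((M * τ₀).trace.re + ((1 - M) * τ₁).trace.re)
  have hset : {p : ℝ | ∃ M₀ M₁ : Matrix (Fin d) (Fin d) ℂ, M₀.PosSemidef ∧ M₁.PosSemidef ∧
      M₀ + M₁ = 1 ∧ p = (1 / 2) * ((M₀ * τ₀).trace.re + (M₁ * τ₁).trace.re)} =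
      successProb '' Set.Icc 0 1 := by
    ext p
    constructor
    · rintro ⟨M₀, M₁, h₀, h₁, hM, rfl⟩
      obtain rfl := eq_sub_of_add_eq' hM
      exact ⟨M₀, ⟨h₀.nonneg, h₁⟩, rfl⟩
    · rintro ⟨M, ⟨h₀, h₁⟩, rfl⟩
      exact ⟨M, 1 - M, Matrix.nonneg_iff_posSemidef.mp h₀, h₁, add_sub_cancel _ _, rfl⟩
  have hcont : Continuous successProb := by fun_prop
  have hmem := (isCompact_Icc_zero_one_of_properSpace.image hcont).sSup_mem
    ((Set.nonempty_Icc.mpr zero_le_one).image successProb)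
  rwa [← hset] at hmem

/-- Density matrices, the states of a finite-dimensional quantum system. -/
structure IsDensityMatrix {n : Type*} [Fintype n] (ρ : Matrix n n ℂ) : Prop where
  posSemidef : ρ.PosSemidef
  trace_eq_one : ρ.trace = 1

theorem mul_eq_zero_of_distProb_eq_one {d : ℕ} {τ₀ τ₁ : Matrix (Fin d) (Fin d) ℂ}
    (h₀ : IsDensityMatrix τ₀) (h₁ : IsDensityMatrix τ₁) (h : distProb τ₀ τ₁ = 1) :
    τ₀ * τ₁ = 0 := by
  obtain ⟨M₀, M₁, hM₀, hM₁, hM, hprob⟩ := exists_measurement_eq_distProb τ₀ τ₁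
  have htotal {τ : Matrix (Fin d) (Fin d) ℂ} (hτ : IsDensityMatrix τ) :
      (M₀ * τ).trace.re + (M₁ * τ).trace.re = 1 := by
    rw [← Complex.add_re, ← Matrix.trace_add, ← Matrix.add_mul, hM, Matrix.one_mul,
      hτ.trace_eq_one, Complex.one_re]
  obtain ⟨hre₁₀, him₁₀⟩ :=
    Complex.nonneg_iff.mp (trace_mul_nonneg_of_posSemidef hM₁ h₀.posSemidef)
  obtain ⟨hre₀₁, him₀₁⟩ :=
    Complex.nonneg_iff.mp (trace_mul_nonneg_of_posSemidef hM₀ h₁.posSemidef)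
  have h₁₀ : M₁ * τ₀ = 0 := mul_eq_zero_of_trace_mul_eq_zero hM₁ h₀.posSemidef <|
    Complex.ext (by linarith [htotal h₀, htotal h₁, Complex.zero_re]) him₁₀.symm
  have h₀₁ : M₀ * τ₁ = 0 := mul_eq_zero_of_trace_mul_eq_zero hM₀ h₁.posSemidef <|
    Complex.ext (by linarith [htotal h₀, htotal h₁, Complex.zero_re]) him₀₁.symm
  have h₁₀' : τ₀ * M₁ = 0 := by
    simpa [hM₁.isHermitian.eq, h₀.posSemidef.isHermitian.eq] using
      congrArg Matrix.conjTranspose h₁₀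
  calc τ₀ * τ₁ = τ₀ * (M₀ + M₁) * τ₁ := by rw [hM, Matrix.mul_one]
    _ = τ₀ * (M₀ * τ₁) + τ₀ * M₁ * τ₁ := by rw [Matrix.mul_add, Matrix.add_mul, Matrix.mul_assoc]
    _ = 0 := by rw [h₀₁, h₁₀', Matrix.mul_zero, Matrix.zero_mul, add_zero]

end Discrimination

section BlockRow

variable {R κ p n : Type*}

/-- The blocks `X k` placed side by side, so that a family of Kraus operators can be treated as a
single matrix. -/
def blockRow (X : κ → Matrix p n R) : Matrix p (κ × n) R :=
  Matrix.of fun i kj => X kj.1 i kj.2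

theorem mul_blockRow {q : Type*} [NonUnitalNonAssocSemiring R] [Fintype p]
    (V : Matrix q p R) (X : κ → Matrix p n R) :
    V * blockRow X = blockRow fun k => V * X k := rfl

theorem blockRow_injective :
    Function.Injective (blockRow : (κ → Matrix p n R) → Matrix p (κ × n) R) := fun _ _ h =>
  funext fun k => Matrix.ext fun i j => congrFun (congrFun h i) (k, j)

theorem conjTranspose_blockRow_mul_blockRow_apply [NonUnitalSemiring R] [StarRing R]
    [Fintype p] (X Y : κ → Matrix p n R) (ki lj : κ × n) :
    ((blockRow X)ᴴ * blockRow Y) ki lj = ((X ki.1)ᴴ * Y lj.1) ki.2 lj.2 := rfl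

theorem blockRow_mul_conjTranspose_blockRow [NonUnitalSemiring R] [StarRing R]
    [Fintype κ] [Fintype n] (X Y : κ → Matrix p n R) :
    blockRow X * (blockRow Y)ᴴ = ∑ k, X k * (Y k)ᴴ := by
  ext i j
  simp only [blockRow, Matrix.mul_apply, Matrix.sum_apply, Fintype.sum_prod_type, Matrix.of_apply,
    Matrix.conjTranspose_apply]

end BlockRow

section KrausMap

variable {κ p n : Type*} [Fintype κ] [Fintype n]

/-- The map `ρ ↦ ∑ k, A k * ρ * (A k)ᴴ` with Kraus operators `A`. It is a quantum channel when
`∑ k, (A k)ᴴ * A k = 1`. -/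
def krausMap (A : κ → Matrix p n ℂ) (ρ : Matrix n n ℂ) : Matrix p p ℂ :=
  ∑ k, A k * ρ * (A k)ᴴ

variable [Fintype p]

theorem IsDensityMatrix.krausMap [DecidableEq n] {A : κ → Matrix p n ℂ} {ρ : Matrix n n ℂ}
    (hρ : IsDensityMatrix ρ) (hA : ∑ k, (A k)ᴴ * A k = 1) : IsDensityMatrix (krausMap A ρ) where
  posSemidef := Matrix.posSemidef_sum _ fun k _ => hρ.posSemidef.mul_mul_conjTranspose_same (A k)
  trace_eq_one := by
    simp only [_root_.krausMap, Matrix.trace_sum, Matrix.trace_mul_cycle _ ρ]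
    rw [← Matrix.trace_sum, ← Matrix.sum_mul, hA, Matrix.one_mul, hρ.trace_eq_one]

theorem mul_conjTranspose_mul_mul_eq_zero_of_krausMap_mul_krausMap_eq_zero
    {A : κ → Matrix p n ℂ} {ρ σ : Matrix n n ℂ} (hρ : ρ.PosSemidef) (hσ : σ.PosSemidef)
    (h : krausMap A ρ * krausMap A σ = 0) (k l : κ) : ρ * ((A k)ᴴ * A l) * σ = 0 := by
  classical
  obtain ⟨R, rfl⟩ := CStarAlgebra.nonneg_iff_eq_mul_star_self.mp hρ.nonneg
  obtain ⟨S, rfl⟩ := CStarAlgebra.nonneg_iff_eq_mul_star_self.mp hσ.nonneg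
  simp only [Matrix.star_eq_conjTranspose] at h ⊢
  have hgram (T : Matrix n n ℂ) : krausMap A (T * Tᴴ) =
      blockRow (fun k => A k * T) * (blockRow fun k => A k * T)ᴴ := by
    rw [blockRow_mul_conjTranspose_blockRow]
    simp only [krausMap, Matrix.conjTranspose_mul, Matrix.mul_assoc]
  rw [hgram, hgram, Matrix.mul_self_mul_conjTranspose_eq_zero,
    Matrix.self_mul_conjTranspose_mul_eq_zero] at h
  have hkl : (A k * R)ᴴ * (A l * S) = 0 := by
    ext i j
    exact congrFun (congrFun h (k, i)) (l, j)
  calc R * Rᴴ * ((A k)ᴴ * A l) * (S * Sᴴ) = R * ((A k * R)ᴴ * (A l * S)) * Sᴴ := by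
        simp only [Matrix.conjTranspose_mul, Matrix.mul_assoc]
    _ = 0 := by rw [hkl, Matrix.mul_zero, Matrix.zero_mul]

theorem krausMap_krausMap {ι q : Type*} [Fintype ι] (B : ι → Matrix q p ℂ) (A : κ → Matrix p n ℂ)
    (ρ : Matrix n n ℂ) :
    krausMap B (krausMap A ρ) = krausMap (fun jk : ι × κ => B jk.1 * A jk.2) ρ := by
  simp only [krausMap, Fintype.sum_prod_type, Matrix.mul_sum, Matrix.sum_mul,
    Matrix.conjTranspose_mul, Matrix.mul_assoc]

theorem krausMap_smul_one [DecidableEq n] (a : κ → ℂ) (ρ : Matrix n n ℂ) :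
    krausMap (fun k => a k • (1 : Matrix n n ℂ)) ρ = (∑ k, star (a k) * a k) • ρ := by
  simp only [krausMap, Matrix.conjTranspose_smul, Matrix.conjTranspose_one, Matrix.smul_mul,
    Matrix.mul_smul, Matrix.one_mul, Matrix.mul_one, smul_smul, Finset.sum_smul]

end KrausMap

section Recovery

variable {κ p n : Type*} [Fintype p] [Fintype n] [DecidableEq p] [DecidableEq n]

theorem exists_isometry_mul_eq_kronecker_of_conjTranspose_mul_eq_smul_one [Finite κ]
    {A : κ → Matrix p n ℂ} {c : κ → κ → ℂ} (hc : ∀ k l, (A k)ᴴ * A l = c k l • 1) (i₀ : n) :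
    ∃ V : Matrix (p × n) p ℂ, Vᴴ * V = 1 ∧
      ∀ k, V * A k = (A k ⊗ₖ (1 : Matrix n n ℂ)).submatrix id (Prod.mk i₀) := by
  have hcard : Fintype.card p ≤ Fintype.card (p × n) :=
    Fintype.card_le_of_injective (fun x => (x, i₀)) fun _ _ h => congrArg Prod.fst h
  let G (k : κ) : Matrix (p × n) n ℂ := (A k ⊗ₖ (1 : Matrix n n ℂ)).submatrix id (Prod.mk i₀)
  have hG (k l : κ) : (G k)ᴴ * G l = (A k)ᴴ * A l := by
    have hsub : (G k)ᴴ * G l =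
        ((A k ⊗ₖ (1 : Matrix n n ℂ))ᴴ * (A l ⊗ₖ (1 : Matrix n n ℂ))).submatrix
          (Prod.mk i₀) (Prod.mk i₀) := rfl
    rw [hsub, Matrix.conjTranspose_kronecker, ← Matrix.mul_kronecker_mul, hc,
      Matrix.conjTranspose_one, Matrix.mul_one]
    ext i j
    simp [Matrix.one_apply]
  obtain ⟨V, hV, hVA⟩ := exists_isometry_mul_eq_of_gram_eq hcard
    (X := blockRow A) (Y := blockRow G) (by
      ext ki lj
      simp only [conjTranspose_blockRow_mul_blockRow_apply, hG])
  exact ⟨V, hV, congrFun (blockRow_injective ((mul_blockRow V A).symm.trans hVA))⟩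

theorem exists_krausMap_krausMap_eq_self_of_conjTranspose_mul_eq_smul_one [Fintype κ] [Nonempty n]
    {A : κ → Matrix p n ℂ} (hA : ∑ k, (A k)ᴴ * A k = 1) {c : κ → κ → ℂ}
    (hc : ∀ k l, (A k)ᴴ * A l = c k l • 1) :
    ∃ B : p → Matrix n p ℂ, ∑ j, (B j)ᴴ * B j = 1 ∧
      ∀ ρ : Matrix n n ℂ, krausMap B (krausMap A ρ) = ρ := by
  obtain ⟨i₀⟩ := ‹Nonempty n›
  obtain ⟨V, hV, hVA⟩ := exists_isometry_mul_eq_kronecker_of_conjTranspose_mul_eq_smul_one hc i₀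
  let B (j : p) : Matrix n p ℂ := V.submatrix (Prod.mk j) id
  have hBA (j : p) (k : κ) : B j * A k = A k j i₀ • 1 := by
    ext i i'
    exact congrFun (congrFun (hVA k) (j, i)) i'
  refine ⟨B, ?_, fun ρ => ?_⟩
  · rw [← hV]
    ext x y
    simp only [B, Matrix.sum_apply, Matrix.mul_apply, Matrix.conjTranspose_apply,
      Matrix.submatrix_apply, id, Fintype.sum_prod_type]
  · have hweight : ∑ jk : p × κ, star (A jk.2 jk.1 i₀) * A jk.2 jk.1 i₀ = 1 := by
      rw [Fintype.sum_prod_type_right]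
      simpa [Matrix.sum_apply, Matrix.mul_apply] using congrFun (congrFun hA i₀) i₀
    simp only [krausMap_krausMap, hBA]
    rw [krausMap_smul_one, hweight, one_smul]

end Recovery

section BB84

theorem isDensityMatrix_of_conjTranspose_mul_self_eq {n : Type*} [Fintype n] {ρ : Matrix n n ℂ}
    (h : ρᴴ * ρ = ρ) (htr : ρ.trace = 1) : IsDensityMatrix ρ :=
  ⟨h ▸ Matrix.posSemidef_conjTranspose_mul_self ρ, htr⟩

theorem isDensityMatrix_σ0p : IsDensityMatrix σ0p :=
  isDensityMatrix_of_conjTranspose_mul_self_eq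
    (by
      ext i j
      fin_cases i <;> fin_cases j <;> norm_num [σ0p, Matrix.mul_apply])
    (by norm_num [σ0p, Matrix.trace_fin_two])

theorem isDensityMatrix_σ1p : IsDensityMatrix σ1p :=
  isDensityMatrix_of_conjTranspose_mul_self_eq
    (by
      ext i j
      fin_cases i <;> fin_cases j <;> norm_num [σ1p, Matrix.mul_apply])
    (by norm_num [σ1p, Matrix.trace_fin_two])

theorem isDensityMatrix_σ0x : IsDensityMatrix σ0x :=
  isDensityMatrix_of_conjTranspose_mul_self_eq
    (by
      ext i j
      fin_cases i <;> fin_cases j <;> norm_num [σ0x, Matrix.mul_apply, Complex.conj_ofNat])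
    (by norm_num [σ0x, Matrix.trace_fin_two])

theorem isDensityMatrix_σ1x : IsDensityMatrix σ1x :=
  isDensityMatrix_of_conjTranspose_mul_self_eq
    (by
      ext i j
      fin_cases i <;> fin_cases j <;> norm_num [σ1x, Matrix.mul_apply, Complex.conj_ofNat])
    (by norm_num [σ1x, Matrix.trace_fin_two])

theorem eq_smul_one_of_bb84_mul_mul_eq_zero {X : Matrix (Fin 2) (Fin 2) ℂ} (h01 : σ0p * X * σ1p = 0)
    (h10 : σ1p * X * σ0p = 0) (hx : σ0x * X * σ1x = 0) : X = X 0 0 • 1 := by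
  have hX01 : X 0 1 = 0 := by
    simpa [σ0p, σ1p, Matrix.mul_apply, Matrix.vecMul, dotProduct] using congrFun (congrFun h01 0) 1
  have hX10 : X 1 0 = 0 := by
    simpa [σ0p, σ1p, Matrix.mul_apply, Matrix.vecMul, dotProduct] using congrFun (congrFun h10 1) 0
  have hX11 : X 1 1 = X 0 0 := by
    have hx00 : 2⁻¹ * X 0 0 * 2⁻¹ - 2⁻¹ * X 1 1 * 2⁻¹ = 0 := by
      simpa [σ0x, σ1x, Matrix.mul_apply, Matrix.vecMul, dotProduct, hX01, hX10, sub_eq_add_neg]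
        using congrFun (congrFun hx 0) 0
    linear_combination -4 * hx00
  ext i j
  fin_cases i <;> fin_cases j <;> simp [hX01, hX10, hX11]

theorem mul_conjTranspose_mul_mul_eq_zero_of_distProb_krausMap_eq_one {κ n : Type*} [Fintype κ]
    [Fintype n] [DecidableEq n] {d : ℕ} {A : κ → Matrix (Fin d) n ℂ}
    (hA : ∑ k, (A k)ᴴ * A k = 1) {ρ σ : Matrix n n ℂ} (hρ : IsDensityMatrix ρ)
    (hσ : IsDensityMatrix σ) (h : distProb (krausMap A ρ) (krausMap A σ) = 1) (k l : κ) :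
    ρ * ((A k)ᴴ * A l) * σ = 0 :=
  mul_conjTranspose_mul_mul_eq_zero_of_krausMap_mul_krausMap_eq_zero hρ.posSemidef hσ.posSemidef
    (mul_eq_zero_of_distProb_eq_one (hρ.krausMap hA) (hσ.krausMap hA) h) k l

theorem conjTranspose_mul_eq_smul_one_of_distProb_eq_one {κ : Type*} [Fintype κ] {d : ℕ}
    {A : κ → Matrix (Fin d) (Fin 2) ℂ} (hA : ∑ k, (A k)ᴴ * A k = 1)
    (hplus : distProb (krausMap A σ0p) (krausMap A σ1p) = 1)
    (htimes : distProb (krausMap A σ0x) (krausMap A σ1x) = 1) (k l : κ) :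
    (A k)ᴴ * A l = ((A k)ᴴ * A l) 0 0 • 1 := by
  have hp := mul_conjTranspose_mul_mul_eq_zero_of_distProb_krausMap_eq_one hA
    isDensityMatrix_σ0p isDensityMatrix_σ1p hplus
  have hx := mul_conjTranspose_mul_mul_eq_zero_of_distProb_krausMap_eq_one hA
    isDensityMatrix_σ0x isDensityMatrix_σ1x htimes
  refine eq_smul_one_of_bb84_mul_mul_eq_zero (hp k l) ?_ (hx k l)
  simpa [Matrix.mul_assoc, isDensityMatrix_σ0p.posSemidef.isHermitian.eq,
    isDensityMatrix_σ1p.posSemidef.isHermitian.eq] using congrArg Matrix.conjTranspose (hp l k)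

end BB84

theorem perfect_distinguishability_implies_reversible
    (d m : ℕ) (A : Fin m → Matrix (Fin d) (Fin 2) ℂ)
    (hA : ∑ k, (A k)ᴴ * A k = 1)
    (hplus : distProb (∑ k, A k * σ0p * (A k)ᴴ) (∑ k, A k * σ1p * (A k)ᴴ) = 1)
    (htimes : distProb (∑ k, A k * σ0x * (A k)ᴴ) (∑ k, A k * σ1x * (A k)ᴴ) = 1) :
    ∃ (m' : ℕ) (B : Fin m' → Matrix (Fin 2) (Fin d) ℂ),
      (∑ j, (B j)ᴴ * B j = 1) ∧
      ∀ ρ : Matrix (Fin 2) (Fin 2) ℂ,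
        ∑ j, B j * (∑ k, A k * ρ * (A k)ᴴ) * (B j)ᴴ = ρ := by
  obtain ⟨B, hB, hBA⟩ := exists_krausMap_krausMap_eq_self_of_conjTranspose_mul_eq_smul_one hA
    (conjTranspose_mul_eq_smul_one_of_distProb_eq_one hA hplus htimes)
  exact ⟨d, B, hB, hBA⟩
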